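/- arXiv:2211.07097 — 9 statements merged into one kernel-verified Lean document; each statement's English description precedes it below -/
import Mathlib

section
/- Suppose the plant matrices A ∈ ℝ^{n×n}, B ∈ ℝ^{n×m₁}, C ∈ ℝ^{p₁×n}, D ∈ ℝ^{p₁×m₁}, E ∈ ℝ^{n×p₂} satisfy the physical realizability (PR) conditions A·Θ₁ + Θ₁·Aᵀ + B·J₁·Bᵀ + E·J̃₂·Eᵀ = 0 and C·Θ₁ + D·J₁·Bᵀ = 0, and the controller matrices a ∈ ℝ^{n×n}, b ∈ ℝ^{n×m₂}, c ∈ ℝ^{p₂×n}, d ∈ ℝ^{p₂×m₂}, e ∈ ℝ^{n×p₁} satisfy the PR conditions with controller CCR matrix Θ₂ = −Θ₁, namely a·(−Θ₁) + (−Θ₁)·aᵀ + b·J₂·bᵀ + e·J̃₁·eᵀ = 0 and c·(−Θ₁) + d·J₂·bᵀ = 0. If moreover the controller has the Luenberger structure a = A − e·C + E·c, then the controller gain matrices b and e satisfy the quadratic constraint (B − e·D)·J₁·(B − e·D)ᵀ + (E·d − b)·J₂·(E·d − b)ᵀ = 0. -/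
/-!
Adding the first PR conditions of plant and controller, with `Θ₂ = -Θ₁` and
`a = A - e C + E c`, cancels `A` and leaves `(e C - E c) Θ₁ + Θ₁ (e C - E c)ᵀ` plus the four
diagonal terms of the claimed identity. The second PR conditions and their transposes (using
antisymmetry of `Θ₁`, `J₁`, `J₂`) turn the former into the cross terms
`-e D J₁ Bᵀ - B J₁ Dᵀ eᵀ - E d J₂ bᵀ - b J₂ dᵀ Eᵀ`, which complete the two squares.
-/

open Matrix

theorem stmt0 {n m₁ m₂ p₁ p₂ : ℕ}
    (Θ₁ : Matrix (Fin n) (Fin n) ℝ)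
    (J₁ : Matrix (Fin m₁) (Fin m₁) ℝ) (J₂ : Matrix (Fin m₂) (Fin m₂) ℝ)
    (A : Matrix (Fin n) (Fin n) ℝ) (B : Matrix (Fin n) (Fin m₁) ℝ)
    (C : Matrix (Fin p₁) (Fin n) ℝ) (D : Matrix (Fin p₁) (Fin m₁) ℝ)
    (E : Matrix (Fin n) (Fin p₂) ℝ)
    (a : Matrix (Fin n) (Fin n) ℝ) (b : Matrix (Fin n) (Fin m₂) ℝ)
    (c : Matrix (Fin p₂) (Fin n) ℝ) (d : Matrix (Fin p₂) (Fin m₂) ℝ)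
    (e : Matrix (Fin n) (Fin p₁) ℝ)
    (hΘ₁ : Θ₁ᵀ = -Θ₁) (hJ₁ : J₁ᵀ = -J₁) (hJ₂ : J₂ᵀ = -J₂)
    (hPR1 : A * Θ₁ + Θ₁ * Aᵀ + B * J₁ * Bᵀ + E * (d * J₂ * dᵀ) * Eᵀ = 0)
    (hPR2 : C * Θ₁ + D * J₁ * Bᵀ = 0)
    (hPR1c : a * (-Θ₁) + (-Θ₁) * aᵀ + b * J₂ * bᵀ + e * (D * J₁ * Dᵀ) * eᵀ = 0)
    (hPR2c : c * (-Θ₁) + d * J₂ * bᵀ = 0)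
    (hLuen : a = A - e * C + E * c) :
    (B - e * D) * J₁ * (B - e * D)ᵀ + (E * d - b) * J₂ * (E * d - b)ᵀ = 0 := by
  -- The second PR conditions and their transposes evaluate `C Θ₁`, `Θ₁ Cᵀ`, `c Θ₁`, `Θ₁ cᵀ`.
  have h₁ : C * Θ₁ = -(D * (J₁ * Bᵀ)) := by
    rw [← Matrix.mul_assoc]
    exact eq_neg_of_add_eq_zero_left hPR2
  have h₂ : Θ₁ * Cᵀ = -(B * (J₁ * Dᵀ)) := by
    have h := congrArg transpose h₁
    simpa [transpose_mul, hΘ₁, hJ₁, Matrix.mul_assoc, neg_eq_iff_eq_neg] using h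
  have h₃ : c * Θ₁ = d * (J₂ * bᵀ) := by
    rw [Matrix.mul_neg, neg_add_eq_zero] at hPR2c
    rw [hPR2c, Matrix.mul_assoc]
  have h₄ : Θ₁ * cᵀ = b * (J₂ * dᵀ) := by
    have h := congrArg transpose h₃
    simpa [transpose_mul, hΘ₁, hJ₂, Matrix.mul_assoc] using h
  -- Reassociated versions, for the products `Θ₁ Cᵀ eᵀ` and `Θ₁ cᵀ Eᵀ` in right-nested form.
  have h₅ : Θ₁ * (Cᵀ * eᵀ) = -(B * (J₁ * (Dᵀ * eᵀ))) := by
    rw [← Matrix.mul_assoc, h₂]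
    simp only [Matrix.neg_mul, Matrix.mul_assoc]
  have h₆ : Θ₁ * (cᵀ * Eᵀ) = b * (J₂ * (dᵀ * Eᵀ)) := by
    rw [← Matrix.mul_assoc, h₄]
    simp only [Matrix.mul_assoc]
  -- In the sum of the first PR conditions the `A`-terms cancel because `Θ₂ = -Θ₁`; what is left
  -- of `a` supplies exactly the cross terms of the two quadratic expressions.
  have hsum := congrArg₂ (· + ·) hPR1 hPR1c
  subst hLuen
  simp only [transpose_add, transpose_sub, transpose_mul, Matrix.mul_add, Matrix.add_mul,
    Matrix.mul_sub, Matrix.sub_mul, Matrix.mul_neg, Matrix.neg_mul, Matrix.mul_assoc,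
    h₁, h₅, h₃, h₆, add_zero] at hsum ⊢
  rw [← hsum]
  abel
end

section
/- Let n be even and suppose m₂ + p₁ ≥ n. Let J₁ ∈ ℝ^{m₁×m₁} be antisymmetric, J₂ = I_{m₂/2} ⊗ 𝐉, and let D ∈ ℝ^{p₁×m₁} satisfy D·J₁·Dᵀ = I_{p₁/2} ⊗ 𝐉. Then for any matrices B ∈ ℝ^{n×m₁}, E ∈ ℝ^{n×p₂}, d ∈ ℝ^{p₂×m₂}, there exist matrices b ∈ ℝ^{n×m₂} and e ∈ ℝ^{n×p₁} satisfying the quadratic constraint (B − e·D)·J₁·(B − e·D)ᵀ + (E·d − b)·J₂·(E·d − b)ᵀ = 0. -/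
/-!
Write `K` for the symplectic form `D * J₁ * Dᵀ`, which satisfies `K * K = -1`.  Completing the
square with `e₀ = -(B * J₁ * Dᵀ * K)` makes the rows of `C = B - e₀ * D` orthogonal, for `J₁`, to
those of `D`.  Hence for `e = e₀ + f` the first summand of the constraint is
`C * J₁ * Cᵀ + f * K * fᵀ`, and with `b = E * d - x` what remains to be solved is
`f * K * fᵀ + x * J₂ * xᵀ = -(C * J₁ * Cᵀ)`, whose right-hand side is an antisymmetric
`n × n` matrix.

Every antisymmetric matrix of size at most `2 * N` is a sum of `N` elementary forms
`u vᵀ - v uᵀ` (`exists_sum_wedge`), by symplectic elimination of two indices at a time.  With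
`N = k₂ + q₁`, the first `k₂` pairs `(u, v)` are the columns of `x` and the other `q₁` those of `f`.
-/

open Matrix Kronecker

/-- Symplectic Gaussian elimination: an antisymmetric matrix supported on at most `2 * N` indices
is a sum of `N` forms `u ∧ v`. -/
lemma exists_sum_wedge {n : ℕ} (N : ℕ) : ∀ (S : Finset (Fin n)) (A : Fin n → Fin n → ℝ),
    S.card ≤ 2 * N → (∀ i j, A j i = -A i j) → (∀ i, i ∉ S → ∀ j, A i j = 0) →
    ∃ u v : Fin N → Fin n → ℝ, ∀ i j, A i j = ∑ k, (u k i * v k j - v k i * u k j) := by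
  induction N with
  | zero =>
    intro S A hS _ h0
    have hS' : S = ∅ := by simpa using hS
    exact ⟨0, 0, fun i j => by simpa using h0 i (by simp [hS']) j⟩
  | succ N ih =>
    intro S A hS hA h0
    by_cases hz : ∀ i j, A i j = 0
    · exact ⟨0, 0, fun i j => by simp [hz]⟩
    push Not at hz
    obtain ⟨b, a, hc⟩ := hz
    have hd : ∀ i, A i i = 0 := fun i => by linarith [hA i i]
    have hab : a ≠ b := by
      rintro rfl
      exact hc (hd a)
    have hb : b ∈ S := by
      by_contra h
      exact hc (h0 b h a)
    have ha : a ∈ S := by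
      by_contra h
      exact hc (by rw [hA a b, h0 a h b, neg_zero])
    have hcard : ((S.erase a).erase b).card ≤ 2 * N := by
      rw [Finset.card_erase_of_mem (Finset.mem_erase.2 ⟨hab.symm, hb⟩),
        Finset.card_erase_of_mem ha]
      omega
    -- Subtracting this multiple of `A(·, b) ∧ A(·, a)` clears the rows and columns `a` and `b`.
    obtain ⟨u, v, huv⟩ := ih ((S.erase a).erase b)
      (fun i j => A i j - (A i b / A b a * A j a - A i a * (A j b / A b a))) hcard
      (fun i j => by
        rw [hA i j]
        ring)
      (fun i hi j => by
        by_cases hib : i = b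
        · subst hib
          rw [hd, hA i j]
          field_simp
          ring
        by_cases hia : i = a
        · subst hia
          rw [hd, hA b i, hA i j]
          field_simp
          ring
        have hiS : i ∉ S := fun h =>
          hi (Finset.mem_erase.2 ⟨hib, Finset.mem_erase.2 ⟨hia, h⟩⟩)
        simp [h0 i hiS])
    refine ⟨Fin.cons (fun i => A i b / A b a) u, Fin.cons (fun i => A i a) v, fun i j => ?_⟩
    rw [Fin.sum_univ_succ]
    simp only [Fin.cons_zero, Fin.cons_succ]
    rw [← huv i j]
    ring

/-- If the columns `(k, 0)` and `(k, 1)` of `G` are `u k` and `v k`, then `G (I ⊗ 𝐉) Gᵀ` is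
`∑ k, u k ∧ v k`. -/
lemma mul_symplectic_mul_transpose {n N : ℕ} (u v : Fin N → Fin n → ℝ) (i j : Fin n) :
    ((Matrix.of fun (i : Fin n) (k : Fin N × Fin 2) => ![u k.1 i, v k.1 i] k.2)
      * ((1 : Matrix (Fin N) (Fin N) ℝ) ⊗ₖ !![(0:ℝ), 1; -1, 0])
      * (Matrix.of fun (i : Fin n) (k : Fin N × Fin 2) => ![u k.1 i, v k.1 i] k.2)ᵀ) i j
      = ∑ k, (u k i * v k j - v k i * u k j) := by
  simp only [Matrix.mul_apply, Fintype.sum_prod_type, Fin.sum_univ_two, kroneckerMap_apply,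
    Matrix.one_apply, Matrix.transpose_apply, Matrix.of_apply]
  refine Finset.sum_congr rfl fun k _ => ?_
  simp
  ring

lemma symplectic_mul_self (N : ℕ) :
    ((1 : Matrix (Fin N) (Fin N) ℝ) ⊗ₖ !![(0:ℝ), 1; -1, 0])
      * ((1 : Matrix (Fin N) (Fin N) ℝ) ⊗ₖ !![(0:ℝ), 1; -1, 0]) = -1 := by
  have h : !![(0:ℝ), 1; -1, 0] * !![(0:ℝ), 1; -1, 0] = (-1 : ℝ) • (1 : Matrix (Fin 2) (Fin 2) ℝ) := by
    ext i j
    fin_cases i <;> fin_cases j <;> simp [Matrix.mul_apply]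
  rw [← Matrix.mul_kronecker_mul, h, Matrix.kronecker_smul, Matrix.one_mul,
    Matrix.one_kronecker_one, neg_one_smul]

theorem stmt1 {n m₁ p₂ k₂ q₁ : ℕ}
    (hn : Even n) (hdim : n ≤ 2 * k₂ + 2 * q₁)
    (J₁ : Matrix (Fin m₁) (Fin m₁) ℝ) (hJ₁ : J₁ᵀ = -J₁)
    (D : Matrix (Fin q₁ × Fin 2) (Fin m₁) ℝ)
    (hD : D * J₁ * Dᵀ = (1 : Matrix (Fin q₁) (Fin q₁) ℝ) ⊗ₖ !![(0:ℝ), 1; -1, 0])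
    (B : Matrix (Fin n) (Fin m₁) ℝ) (E : Matrix (Fin n) (Fin p₂) ℝ)
    (d : Matrix (Fin p₂) (Fin k₂ × Fin 2) ℝ) :
    ∃ (b : Matrix (Fin n) (Fin k₂ × Fin 2) ℝ) (e : Matrix (Fin n) (Fin q₁ × Fin 2) ℝ),
      (B - e * D) * J₁ * (B - e * D)ᵀ
        + (E * d - b) * ((1 : Matrix (Fin k₂) (Fin k₂) ℝ) ⊗ₖ !![(0:ℝ), 1; -1, 0])
          * (E * d - b)ᵀ = 0 := by
  have hKK := symplectic_mul_self q₁
  rw [← hD] at hKK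
  obtain ⟨C, e₀, hC, hCD⟩ : ∃ (C : Matrix (Fin n) (Fin m₁) ℝ)
      (e₀ : Matrix (Fin n) (Fin q₁ × Fin 2) ℝ), C = B - e₀ * D ∧ C * J₁ * Dᵀ = 0 := by
    refine ⟨_, -(B * J₁ * Dᵀ * (D * J₁ * Dᵀ)), rfl, ?_⟩
    have h : B * J₁ * Dᵀ * (D * J₁ * Dᵀ) * D * J₁ * Dᵀ
        = B * J₁ * Dᵀ * ((D * J₁ * Dᵀ) * (D * J₁ * Dᵀ)) := by
      simp only [Matrix.mul_assoc]
    rw [Matrix.neg_mul, sub_neg_eq_add, Matrix.add_mul, Matrix.add_mul, h, hKK]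
    simp
  have hDC : D * J₁ * Cᵀ = 0 := by
    have h := congrArg Matrix.transpose hCD
    simpa [Matrix.transpose_mul, hJ₁, Matrix.mul_assoc] using h
  have hanti : (C * J₁ * Cᵀ)ᵀ = -(C * J₁ * Cᵀ) := by
    simp [Matrix.transpose_mul, hJ₁, Matrix.mul_assoc]
  obtain ⟨u, v, huv⟩ := exists_sum_wedge (k₂ + q₁) Finset.univ (fun i j => -(C * J₁ * Cᵀ) i j)
    (by simp; omega)
    (fun i j => by
      have h := congrFun (congrFun hanti i) j
      simp only [Matrix.transpose_apply, Matrix.neg_apply] at h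
      rw [h])
    (fun i hi => absurd (Finset.mem_univ i) hi)
  set x : Matrix (Fin n) (Fin k₂ × Fin 2) ℝ := Matrix.of fun i k =>
    ![u (Fin.castAdd q₁ k.1) i, v (Fin.castAdd q₁ k.1) i] k.2 with hx
  set f : Matrix (Fin n) (Fin q₁ × Fin 2) ℝ := Matrix.of fun i k =>
    ![u (Fin.natAdd k₂ k.1) i, v (Fin.natAdd k₂ k.1) i] k.2 with hf
  refine ⟨E * d - x, e₀ + f, ?_⟩
  have h1 : B - (e₀ + f) * D = C - f * D := by
    rw [hC, Matrix.add_mul]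
    abel
  have h2 : (C - f * D) * J₁ * (C - f * D)ᵀ = C * J₁ * Cᵀ + f * (D * J₁ * Dᵀ) * fᵀ := by
    have h3 : C * J₁ * (Dᵀ * fᵀ) = 0 := by
      rw [← Matrix.mul_assoc, hCD, Matrix.zero_mul]
    have h4 : f * D * J₁ * Cᵀ = 0 := by
      rw [Matrix.mul_assoc f, Matrix.mul_assoc f, hDC, Matrix.mul_zero]
    rw [Matrix.transpose_sub, Matrix.transpose_mul, Matrix.mul_sub, Matrix.sub_mul,
      Matrix.sub_mul, Matrix.sub_mul, h3, h4]
    simp [Matrix.mul_assoc]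
  rw [h1, h2, hD, sub_sub_cancel]
  ext i j
  have hij := huv i j
  rw [Fin.sum_univ_add] at hij
  rw [Matrix.add_apply, Matrix.add_apply, hx, hf,
    mul_symplectic_mul_transpose (fun k => u (Fin.castAdd q₁ k)) (fun k => v (Fin.castAdd q₁ k)),
    mul_symplectic_mul_transpose (fun k => u (Fin.natAdd k₂ k)) (fun k => v (Fin.natAdd k₂ k)),
    Matrix.zero_apply]
  linarith
end

section
/- For any invertible antisymmetric matrix K ∈ ℝ^{μ×μ} and any antisymmetric matrix α ∈ ℝ^{ν×ν} of even order ν with ν ≤ μ, there exists a matrix β ∈ ℝ^{ν×μ} satisfying β·K·βᵀ = α. -/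
/-!
Read `K` and `α` as alternating bilinear forms `B` on `V = ℝ^μ` and `A` on `W = ℝ^ν`, with `B`
nondegenerate. The matrix `β` amounts to a linear map `f : W → V` with `B (f x) (f y) = A x y`.
Such a map exists whenever `dim W ≤ dim V`, by induction on `dim W` (`exists_pullback_eq`): if
`A = 0` take `f = 0`; otherwise choose `w₁, w₂` with `A w₁ w₂ = 1` and `v₁, v₂` with `B v₁ v₂ = 1`,
send `w₁ ↦ v₁`, `w₂ ↦ v₂`, and use the induction hypothesis on the orthogonal complements of these
hyperbolic planes. Both complements lose exactly two dimensions (`finrank_pairPerp`), and `B` stays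
nondegenerate on its complement.
-/

open Matrix

section Hyperbolic

variable {W : Type*} [AddCommGroup W] [Module ℝ W]

/-- The orthogonal complement of `{a, b}` with respect to the form `A`. -/
def pairPerp (A : W →ₗ[ℝ] W →ₗ[ℝ] ℝ) (a b : W) : Submodule ℝ W :=
  LinearMap.ker ((A.flip a).prod (A.flip b))

theorem mem_pairPerp {A : W →ₗ[ℝ] W →ₗ[ℝ] ℝ} {a b x : W} :
    x ∈ pairPerp A a b ↔ A x a = 0 ∧ A x b = 0 := by
  simp [pairPerp]

theorem self_eq_zero_of_anti {A : W →ₗ[ℝ] W →ₗ[ℝ] ℝ} (hA : ∀ x y, A x y = -A y x) (x : W) :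
    A x x = 0 := by
  linarith [hA x x]

theorem finrank_pairPerp [FiniteDimensional ℝ W] {A : W →ₗ[ℝ] W →ₗ[ℝ] ℝ}
    (hA : ∀ x y, A x y = -A y x) {a b : W} (hab : A a b = 1) :
    Module.finrank ℝ (pairPerp A a b) + 2 = Module.finrank ℝ W := by
  have hba : A b a = -1 := by rw [hA, hab]
  have hsurj : LinearMap.range ((A.flip a).prod (A.flip b)) = ⊤ := by
    rw [LinearMap.range_eq_top]
    rintro ⟨s, t⟩
    refine ⟨t • a - s • b, ?_⟩
    simp [hab, hba, self_eq_zero_of_anti hA]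
  have h := LinearMap.finrank_range_add_finrank_ker ((A.flip a).prod (A.flip b))
  rw [hsurj, finrank_top, Module.finrank_prod, Module.finrank_self] at h
  unfold pairPerp
  omega

/-- The projection onto the complement of a hyperbolic pair `a, b`, along the span of `a, b`. -/
def pairProj (A : W →ₗ[ℝ] W →ₗ[ℝ] ℝ) (hA : ∀ x y, A x y = -A y x) {a b : W} (hab : A a b = 1) :
    W →ₗ[ℝ] pairPerp A a b :=
  LinearMap.codRestrict _
    (LinearMap.id - (A.flip b).smulRight a + (A.flip a).smulRight b) (fun x => by
      have hba : A b a = -1 := by rw [hA, hab]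
      simp [mem_pairPerp, hab, hba, self_eq_zero_of_anti hA])

theorem coe_pairProj (A : W →ₗ[ℝ] W →ₗ[ℝ] ℝ) (hA : ∀ x y, A x y = -A y x) {a b : W}
    (hab : A a b = 1) (x : W) :
    (pairProj A hA hab x : W) = x - A x b • a + A x a • b := rfl

theorem exists_pair {A : W →ₗ[ℝ] W →ₗ[ℝ] ℝ} (h : ∃ x y, A x y ≠ 0) : ∃ a b, A a b = 1 := by
  obtain ⟨x, y, hxy⟩ := h
  exact ⟨x, (A x y)⁻¹ • y, by simp [hxy]⟩

end Hyperbolic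

/-- Every alternating form is a pullback of any nondegenerate alternating form on a space of at
least the same dimension. Over `ℝ`, being alternating is expressed as antisymmetry. -/
theorem exists_pullback_eq (n : ℕ) : ∀ (V W : Type) [AddCommGroup V] [Module ℝ V]
    [FiniteDimensional ℝ V] [AddCommGroup W] [Module ℝ W] [FiniteDimensional ℝ W]
    (B : V →ₗ[ℝ] V →ₗ[ℝ] ℝ) (A : W →ₗ[ℝ] W →ₗ[ℝ] ℝ),
    (∀ x y, B x y = -B y x) → (∀ x, (∀ y, B x y = 0) → x = 0) → (∀ x y, A x y = -A y x) →
    Module.finrank ℝ W ≤ n → Module.finrank ℝ W ≤ Module.finrank ℝ V →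
    ∃ f : W →ₗ[ℝ] V, ∀ x y, B (f x) (f y) = A x y := by
  induction n with
  | zero =>
    intro V W _ _ _ _ _ _ B A hB hBn hA hn hle
    have : Subsingleton W := Module.finrank_zero_iff.mp (Nat.le_zero.mp hn)
    exact ⟨0, fun x y => by simp [Subsingleton.elim x 0]⟩
  | succ n ih =>
    intro V W _ _ _ _ _ _ B A hB hBn hA hn hle
    by_cases hA0 : ∀ x y, A x y = 0
    · exact ⟨0, fun x y => by simp [hA0]⟩
    push Not at hA0
    obtain ⟨w₁, w₂, hw⟩ := exists_pair hA0
    have hW := finrank_pairPerp hA hw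
    have hB0 : ∃ x y, B x y ≠ 0 := by
      by_contra! h
      have : Subsingleton V := ⟨fun x y => (hBn x (h x)).trans (hBn y (h y)).symm⟩
      have := Module.finrank_zero_of_subsingleton (R := ℝ) (M := V)
      omega
    obtain ⟨v₁, v₂, hv⟩ := exists_pair hB0
    have hV := finrank_pairPerp hB hv
    obtain ⟨g, hg⟩ := ih (pairPerp B v₁ v₂) (pairPerp A w₁ w₂)
      (B.compl₁₂ (Submodule.subtype _) (Submodule.subtype _))
      (A.compl₁₂ (Submodule.subtype _) (Submodule.subtype _))
      (fun x y => hB x y)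
      (fun x hx => by
        -- A vector of the complement pairs with `y` as it does with the projection of `y`.
        refine Subtype.ext (hBn x fun y => ?_)
        have h := hx (pairProj B hB hv y)
        obtain ⟨h1, h2⟩ := mem_pairPerp.mp x.2
        simpa [coe_pairProj, h1, h2] using h)
      (fun x y => hA x y) (by omega) (by omega)
    refine ⟨(A.flip w₂).smulRight v₁ - (A.flip w₁).smulRight v₂
      + (Submodule.subtype _) ∘ₗ g ∘ₗ pairProj A hA hw, fun x y => ?_⟩
    have h := hg (pairProj A hA hw x) (pairProj A hA hw y)
    obtain ⟨hx1, hx2⟩ := mem_pairPerp.mp (g (pairProj A hA hw x)).2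
    obtain ⟨hy1, hy2⟩ := mem_pairPerp.mp (g (pairProj A hA hw y)).2
    rw [hB, neg_eq_zero] at hy1 hy2
    have hv' : B v₂ v₁ = -1 := by rw [hB, hv]
    have hw' : A w₂ w₁ = -1 := by rw [hA, hw]
    simp only [LinearMap.compl₁₂_apply, Submodule.subtype_apply, coe_pairProj, map_add, map_sub,
      map_smul, LinearMap.add_apply, LinearMap.sub_apply, LinearMap.smul_apply, smul_eq_mul,
      self_eq_zero_of_anti hA, hw, hw', hA w₁ y, hA w₂ y] at h
    simp only [LinearMap.add_apply, LinearMap.sub_apply, LinearMap.smulRight_apply,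
      LinearMap.comp_apply, LinearMap.flip_apply, Submodule.subtype_apply, map_add, map_sub,
      map_smul, LinearMap.smul_apply, smul_eq_mul, hx1, hx2, hy1, hy2, hv, hv',
      self_eq_zero_of_anti hB]
    linear_combination h

theorem stmt3 {μ ν : ℕ} (hν : Even ν) (hle : ν ≤ μ)
    (K : Matrix (Fin μ) (Fin μ) ℝ) (hKa : Kᵀ = -K) (hKu : IsUnit K)
    (α : Matrix (Fin ν) (Fin ν) ℝ) (hα : αᵀ = -α) :
    ∃ β : Matrix (Fin ν) (Fin μ) ℝ, β * K * βᵀ = α := by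
  have anti : ∀ {k : ℕ} (M : Matrix (Fin k) (Fin k) ℝ), Mᵀ = -M →
      ∀ x y : Fin k → ℝ, Matrix.toLinearMap₂' ℝ M x y = -Matrix.toLinearMap₂' ℝ M y x := by
    intro k M hM x y
    rw [Matrix.toLinearMap₂'_apply', Matrix.toLinearMap₂'_apply', Matrix.dotProduct_mulVec,
      ← Matrix.mulVec_transpose, hM, Matrix.neg_mulVec, neg_dotProduct, dotProduct_comm]
  obtain ⟨f, hf⟩ := exists_pullback_eq ν (Fin μ → ℝ) (Fin ν → ℝ)
    (Matrix.toLinearMap₂' ℝ K) (Matrix.toLinearMap₂' ℝ α) (anti K hKa)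
    (fun x hx => by
      -- `xᵀ K = 0` forces `x = 0` because `K` is invertible.
      have h : x ᵥ* K = 0 ᵥ* K := by
        rw [Matrix.zero_vecMul]
        refine dotProduct_eq_zero _ fun y => ?_
        rw [← Matrix.dotProduct_mulVec, ← Matrix.toLinearMap₂'_apply']
        exact hx y
      exact Matrix.vecMul_injective_of_isUnit hKu h)
    (anti α hα) (by simp) (by simpa using hle)
  refine ⟨(LinearMap.toMatrix' f)ᵀ, ?_⟩
  have h : (Matrix.toLinearMap₂' ℝ K).compl₁₂ f f = Matrix.toLinearMap₂' ℝ α :=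
    LinearMap.ext₂ hf
  have h2 := congrArg (LinearMap.toMatrix₂' ℝ) h
  simpa [LinearMap.toMatrix₂'_compl₁₂] using h2
end

section
/- For any invertible antisymmetric matrix K ∈ ℝ^{μ×μ} and any antisymmetric matrix α ∈ ℝ^{ν×ν} of odd order ν with ν ≤ μ, there exists a matrix β ∈ ℝ^{ν×μ} satisfying β·K·βᵀ = α. -/
open Matrix

/-!
Read coordinate-free, the claim is that an alternating form `a`
on `W` is the pullback of any nondegenerate alternating form `ω` on `V` along some linear map
`W → V`, as soon as `dim W ≤ dim V`. This goes by induction on `dim W`, splitting off hyperbolic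
planes. If `a = 0`, the zero map works. Otherwise choose `x, y ∈ W` with `a x y = 1` and
`p, q ∈ V` with `ω p q = 1`, and send `x ↦ p`, `y ↦ q`. Both orthogonal complements drop in
dimension by exactly two (`finrank_hyperbolicCoords_ker`), `ω` stays nondegenerate on the
complement of `p, q`, and the induction hypothesis supplies the map between the complements.
-/

/-- The coordinates `w ↦ (a w y, a x w)` of the projection of `w` to the plane spanned by `x, y`
when `a` is alternating with `a x y = 1`; the kernel is the orthogonal complement of that plane. -/
def hyperbolicCoords {W : Type} [AddCommGroup W] [Module ℝ W]
    (a : W →ₗ[ℝ] W →ₗ[ℝ] ℝ) (x y : W) : W →ₗ[ℝ] ℝ × ℝ :=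
  (a.flip y).prod (a x)

lemma mem_ker_hyperbolicCoords {W : Type} [AddCommGroup W] [Module ℝ W]
    (a : W →ₗ[ℝ] W →ₗ[ℝ] ℝ) (x y w : W) :
    w ∈ LinearMap.ker (hyperbolicCoords a x y) ↔ a w y = 0 ∧ a x w = 0 := by
  simp [hyperbolicCoords]

lemma finrank_hyperbolicCoords_ker {W : Type} [AddCommGroup W] [Module ℝ W]
    [FiniteDimensional ℝ W] (a : W →ₗ[ℝ] W →ₗ[ℝ] ℝ) (ha : ∀ w, a w w = 0) (x y : W)
    (hxy : a x y = 1) :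
    Module.finrank ℝ (LinearMap.ker (hyperbolicCoords a x y)) + 2 = Module.finrank ℝ W := by
  have hs : Function.Surjective (hyperbolicCoords a x y) := by
    rintro ⟨s, t⟩
    refine ⟨s • x + t • y, ?_⟩
    simp [hyperbolicCoords, ha, hxy]
  have h := LinearMap.finrank_range_add_finrank_ker (hyperbolicCoords a x y)
  rw [LinearMap.range_eq_top.mpr hs, finrank_top] at h
  simp at h
  omega

/-- The projection `w ↦ w - a w y • x - a x w • y` onto the orthogonal complement of the
hyperbolic plane spanned by `x, y`. -/
def hyperbolicProj {W : Type} [AddCommGroup W] [Module ℝ W]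
    (a : W →ₗ[ℝ] W →ₗ[ℝ] ℝ) (ha : ∀ w, a w w = 0) (x y : W) (hxy : a x y = 1) :
    W →ₗ[ℝ] LinearMap.ker (hyperbolicCoords a x y) :=
  LinearMap.codRestrict _
    (LinearMap.id - (a.flip y).smulRight x - (a x).smulRight y) (by
      intro w
      rw [mem_ker_hyperbolicCoords]
      simp [ha, hxy])

lemma coe_hyperbolicProj {W : Type} [AddCommGroup W] [Module ℝ W]
    (a : W →ₗ[ℝ] W →ₗ[ℝ] ℝ) (ha : ∀ w, a w w = 0) (x y : W) (hxy : a x y = 1) (w : W) :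
    (hyperbolicProj a ha x y hxy w : W) = w - a w y • x - a x w • y := by
  simp [hyperbolicProj]

lemma form_antisymm {W : Type} [AddCommGroup W] [Module ℝ W]
    (a : W →ₗ[ℝ] W →ₗ[ℝ] ℝ) (ha : ∀ w, a w w = 0) (u v : W) : a u v = - a v u := by
  have h := ha (u + v)
  simp [ha] at h
  linarith

/-- A nonzero value of a bilinear form can be rescaled to `1`. -/
lemma exists_eq_one {W : Type} [AddCommGroup W] [Module ℝ W]
    (a : W →ₗ[ℝ] W →ₗ[ℝ] ℝ) (u v : W) (h : a u v ≠ 0) : ∃ x y, a x y = 1 :=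
  ⟨u, (a u v)⁻¹ • v, by simp [h]⟩

/-- Every alternating form is a pullback of every nondegenerate alternating form on a space of
at least the same dimension. -/
lemma exists_pullback (n : ℕ) : ∀ (W V : Type) [AddCommGroup W] [Module ℝ W]
    [FiniteDimensional ℝ W] [AddCommGroup V] [Module ℝ V] [FiniteDimensional ℝ V]
    (a : W →ₗ[ℝ] W →ₗ[ℝ] ℝ) (ω : V →ₗ[ℝ] V →ₗ[ℝ] ℝ), (∀ w, a w w = 0) → (∀ v, ω v v = 0) →
    (∀ v, (∀ u, ω v u = 0) → v = 0) → Module.finrank ℝ W = n → n ≤ Module.finrank ℝ V →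
    ∃ f : W →ₗ[ℝ] V, ∀ w z, ω (f w) (f z) = a w z := by
  induction n using Nat.strong_induction_on with
  | _ n ih =>
  intro W V _ _ _ _ _ _ a ω ha hω hnd hn hle
  by_cases h0 : ∀ u v, a u v = 0
  · exact ⟨0, by simp [h0]⟩
  push Not at h0
  obtain ⟨u, v, huv⟩ := h0
  obtain ⟨x, y, hxy⟩ := exists_eq_one a u v huv
  have hdW := finrank_hyperbolicCoords_ker a ha x y hxy
  have hpq : ∃ p q, ω p q = 1 := by
    have : Nontrivial V := Module.nontrivial_of_finrank_pos (R := ℝ) (by omega)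
    obtain ⟨p, hp⟩ := exists_ne (0 : V)
    have : ∃ q, ω p q ≠ 0 := by
      by_contra! h
      exact hp (hnd p h)
    obtain ⟨q, hq⟩ := this
    exact exists_eq_one ω p q hq
  obtain ⟨p, q, hpq⟩ := hpq
  have hdV := finrank_hyperbolicCoords_ker ω hω p q hpq
  obtain ⟨g, hg⟩ := ih (n - 2) (by omega) (LinearMap.ker (hyperbolicCoords a x y))
    (LinearMap.ker (hyperbolicCoords ω p q))
    (a.domRestrict₁₂ _ _) (ω.domRestrict₁₂ _ _)
    (fun w => ha w) (fun v => hω v)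
    (by
      intro v hv
      apply Subtype.ext
      refine hnd v fun u => ?_
      have h1 := hv (hyperbolicProj ω hω p q hpq u)
      obtain ⟨h2, h3⟩ := (mem_ker_hyperbolicCoords ω p q v).1 v.2
      rw [form_antisymm ω hω] at h3
      rw [LinearMap.domRestrict₁₂_apply, coe_hyperbolicProj] at h1
      have h4 : ω v p = 0 := by linarith
      simpa [h2, h4] using h1)
    (by omega) (by omega)
  refine ⟨(a.flip y).smulRight p + (a x).smulRight q +
    (LinearMap.ker (hyperbolicCoords ω p q)).subtype ∘ₗ g ∘ₗ hyperbolicProj a ha x y hxy, ?_⟩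
  intro w z
  have key := hg (hyperbolicProj a ha x y hxy w) (hyperbolicProj a ha x y hxy z)
  rw [LinearMap.domRestrict₁₂_apply, LinearMap.domRestrict₁₂_apply, coe_hyperbolicProj,
    coe_hyperbolicProj] at key
  obtain ⟨r1, r2⟩ := (mem_ker_hyperbolicCoords ω p q _).1 (g (hyperbolicProj a ha x y hxy w)).2
  obtain ⟨s1, s2⟩ := (mem_ker_hyperbolicCoords ω p q _).1 (g (hyperbolicProj a ha x y hxy z)).2
  have r3 := form_antisymm ω hω (g (hyperbolicProj a ha x y hxy w)) p
  have s3 := form_antisymm ω hω q (g (hyperbolicProj a ha x y hxy z))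
  rw [r2] at r3
  rw [s1] at s3
  have qp := form_antisymm ω hω q p
  have yx := form_antisymm a ha y x
  have wx := form_antisymm a ha w x
  have yz := form_antisymm a ha y z
  simp [ha, hxy, yx, wx, yz] at key
  simp [hω, hpq, qp, r1, s2, r3, s3, key]
  ring

lemma toLinearMap₂'_self_eq_zero {n : ℕ} (M : Matrix (Fin n) (Fin n) ℝ) (hM : Mᵀ = -M)
    (v : Fin n → ℝ) : Matrix.toLinearMap₂' ℝ M v v = 0 := by
  rw [Matrix.toLinearMap₂'_apply']
  have h : v ⬝ᵥ M *ᵥ v = v ⬝ᵥ Mᵀ *ᵥ v := by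
    rw [Matrix.mulVec_transpose, dotProduct_comm v (v ᵥ* M), Matrix.dotProduct_mulVec]
  rw [hM, Matrix.neg_mulVec, dotProduct_neg] at h
  linarith

theorem stmt4 {μ ν : ℕ} (hν : Odd ν) (hle : ν ≤ μ)
    (K : Matrix (Fin μ) (Fin μ) ℝ) (hKa : Kᵀ = -K) (hKu : IsUnit K)
    (α : Matrix (Fin ν) (Fin ν) ℝ) (hα : αᵀ = -α) :
    ∃ β : Matrix (Fin ν) (Fin μ) ℝ, β * K * βᵀ = α := by
  obtain ⟨f, hf⟩ := exists_pullback ν (Fin ν → ℝ) (Fin μ → ℝ) (Matrix.toLinearMap₂' ℝ α)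
    (Matrix.toLinearMap₂' ℝ K) (toLinearMap₂'_self_eq_zero α hα)
    (toLinearMap₂'_self_eq_zero K hKa)
    (by
      intro v hv
      have h : v ᵥ* K = 0 := by
        apply dotProduct_eq_zero
        intro u
        rw [← Matrix.dotProduct_mulVec, ← Matrix.toLinearMap₂'_apply']
        exact hv u
      exact Matrix.vecMul_injective_of_isUnit hKu (by simpa using h))
    (by simp) (by simpa using hle)
  refine ⟨(LinearMap.toMatrix' f)ᵀ, ?_⟩
  apply (Matrix.toLinearMap₂' ℝ (S₁ := ℝ) (S₂ := ℝ) (N₂ := ℝ)).injective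
  ext i j
  have h := hf (Pi.single i 1) (Pi.single j 1)
  rw [← LinearMap.toMatrix'_mulVec f, ← LinearMap.toMatrix'_mulVec f] at h
  rw [Matrix.toLinearMap₂'_apply', Matrix.toLinearMap₂'_apply'] at h
  simp only [LinearMap.comp_apply, LinearMap.coe_single, Matrix.toLinearMap₂'_apply']
  rw [← h, Matrix.transpose_transpose, ← Matrix.mulVec_mulVec, ← Matrix.mulVec_mulVec,
    Matrix.dotProduct_mulVec _ (LinearMap.toMatrix' f)ᵀ, Matrix.vecMul_transpose]
end

section
/- Let J ∈ ℝ^{m×m} be antisymmetric, Δ ∈ ℝ^{s×m}, Γ ∈ ℝ^{n×m}, and suppose K := Δ·J·Δᵀ satisfies K² = −I_s. Then for every γ ∈ ℝ^{n×s} the completion-of-the-square identity (Γ − γ·Δ)·J·(Γ − γ·Δ)ᵀ = (γ − γ₀)·K·(γ − γ₀)ᵀ + ℧ holds, where γ₀ := −Γ·J·Δᵀ·K and ℧ := Γ·(J + J·Δᵀ·K·Δ·J)·Γᵀ; moreover ℧ is antisymmetric. -/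
/-!
Put `A = Γ J Δᵀ` and `B = Δ J Γᵀ`. Antisymmetry of `J` gives `Kᵀ = -K` and `Aᵀ = -B`, so `K² = -1`
yields `γ₀ K = A`, `K γ₀ᵀ = B` and `γ₀ K γ₀ᵀ = -A K B`. Both sides of the identity then expand to
`γ K γᵀ - γ B - A γᵀ + Γ J Γᵀ`, because `Mho = Γ J Γᵀ + A K B`. Transposing this last expression
gives the antisymmetry of `Mho`.
-/

open Matrix

theorem stmt7 {m s n : ℕ}
    (J : Matrix (Fin m) (Fin m) ℝ) (hJ : Jᵀ = -J)
    (Δ : Matrix (Fin s) (Fin m) ℝ) (Γ : Matrix (Fin n) (Fin m) ℝ)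
    (K : Matrix (Fin s) (Fin s) ℝ) (hK : K = Δ * J * Δᵀ) (hK2 : K * K = -1)
    (γ₀ : Matrix (Fin n) (Fin s) ℝ) (hγ₀ : γ₀ = -(Γ * J * Δᵀ * K))
    (Mho : Matrix (Fin n) (Fin n) ℝ)
    (hMho : Mho = Γ * (J + J * Δᵀ * K * Δ * J) * Γᵀ) :
    (∀ γ : Matrix (Fin n) (Fin s) ℝ,
      (Γ - γ * Δ) * J * (Γ - γ * Δ)ᵀ = (γ - γ₀) * K * (γ - γ₀)ᵀ + Mho) ∧
    Mhoᵀ = -Mho := by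
  have hKt : Kᵀ = -K := by
    rw [hK]
    simp [Matrix.transpose_mul, hJ, Matrix.mul_assoc]
  have hγ₀t : γ₀ᵀ = -(K * (Δ * J * Γᵀ)) := by
    rw [hγ₀]
    simp [Matrix.transpose_mul, hJ, hKt, Matrix.mul_assoc]
  have hleft : γ₀ * K = Γ * J * Δᵀ := by
    rw [hγ₀, Matrix.neg_mul, Matrix.mul_assoc _ K K, hK2]
    simp
  have hright : K * γ₀ᵀ = Δ * J * Γᵀ := by
    rw [hγ₀t, Matrix.mul_neg, ← Matrix.mul_assoc K K, hK2]
    simp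
  have hMho' : Mho = Γ * J * Γᵀ + Γ * J * Δᵀ * (K * (Δ * J * Γᵀ)) := by
    rw [hMho]
    simp only [Matrix.mul_add, Matrix.add_mul, Matrix.mul_assoc]
  refine ⟨fun γ => ?_, ?_⟩
  · have hL : (Γ - γ * Δ) * J * (Γ - γ * Δ)ᵀ
        = Γ * J * Γᵀ - Γ * J * Δᵀ * γᵀ - γ * (Δ * J * Γᵀ) + γ * K * γᵀ := by
      rw [hK]
      simp only [Matrix.transpose_sub, Matrix.transpose_mul, Matrix.mul_sub, Matrix.sub_mul,
        Matrix.mul_assoc]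
      abel
    have hR : (γ - γ₀) * K * (γ - γ₀)ᵀ
        = γ * K * γᵀ - γ * (K * γ₀ᵀ) - γ₀ * K * γᵀ + γ₀ * K * γ₀ᵀ := by
      simp only [Matrix.transpose_sub, Matrix.mul_sub, Matrix.sub_mul, Matrix.mul_assoc]
      abel
    rw [hL, hR, hright, hleft, hγ₀t, hMho', Matrix.mul_neg]
    abel
  · rw [hMho]
    simp only [Matrix.transpose_mul, Matrix.transpose_add, Matrix.transpose_transpose, hJ, hKt,
      Matrix.mul_add, Matrix.add_mul, Matrix.mul_neg, Matrix.neg_mul, Matrix.mul_assoc, neg_neg]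
    abel
end

section
/- Let Θ₁ ∈ ℝ^{n×n}, Θ₂ ∈ ℝ^{n×n}, J₁ ∈ ℝ^{m₁×m₁}, J₂ ∈ ℝ^{m₂×m₂} be antisymmetric, and set J̃₁ := D·J₁·Dᵀ, J̃₂ := d·J₂·dᵀ. Suppose the plant matrices satisfy the PR conditions A·Θ₁ + Θ₁·Aᵀ + B·J₁·Bᵀ + E·J̃₂·Eᵀ = 0 and C·Θ₁ + D·J₁·Bᵀ = 0, and the controller matrices satisfy the PR conditions a·Θ₂ + Θ₂·aᵀ + b·J₂·bᵀ + e·J̃₁·eᵀ = 0 and c·Θ₂ + d·J₂·bᵀ = 0. Then the closed-loop matrices 𝒜 := [[A, E·c],[e·C, a]], ℬ := [[B, E·d],[e·D, b]] satisfy the closed-loop PR condition 𝒜·Θ + Θ·𝒜ᵀ + ℬ·J·ℬᵀ = 0, where Θ := diag(Θ₁, Θ₂) and J := diag(J₁, J₂). -/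
open Matrix

/-! The closed-loop expression is computed block by block. Its diagonal blocks are the first PR
conditions of the plant and the controller. Each off-diagonal block is a sum of two terms: one is a
multiple of a second PR condition, the other a multiple of the transpose of the other system's second
PR condition, rewritten by antisymmetry of `Θᵢ` and `Jᵢ`. -/

theorem stmt9 {n m₁ m₂ p₁ p₂ : ℕ}
    (Θ₁ Θ₂ : Matrix (Fin n) (Fin n) ℝ)
    (J₁ : Matrix (Fin m₁) (Fin m₁) ℝ) (J₂ : Matrix (Fin m₂) (Fin m₂) ℝ)
    (hΘ₁ : Θ₁ᵀ = -Θ₁) (hΘ₂ : Θ₂ᵀ = -Θ₂) (hJ₁ : J₁ᵀ = -J₁) (hJ₂ : J₂ᵀ = -J₂)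
    (A : Matrix (Fin n) (Fin n) ℝ) (B : Matrix (Fin n) (Fin m₁) ℝ)
    (C : Matrix (Fin p₁) (Fin n) ℝ) (D : Matrix (Fin p₁) (Fin m₁) ℝ)
    (E : Matrix (Fin n) (Fin p₂) ℝ)
    (a : Matrix (Fin n) (Fin n) ℝ) (b : Matrix (Fin n) (Fin m₂) ℝ)
    (c : Matrix (Fin p₂) (Fin n) ℝ) (d : Matrix (Fin p₂) (Fin m₂) ℝ)
    (e : Matrix (Fin n) (Fin p₁) ℝ)
    (hPR1 : A * Θ₁ + Θ₁ * Aᵀ + B * J₁ * Bᵀ + E * (d * J₂ * dᵀ) * Eᵀ = 0)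
    (hPR2 : C * Θ₁ + D * J₁ * Bᵀ = 0)
    (hPR1c : a * Θ₂ + Θ₂ * aᵀ + b * J₂ * bᵀ + e * (D * J₁ * Dᵀ) * eᵀ = 0)
    (hPR2c : c * Θ₂ + d * J₂ * bᵀ = 0) :
    let cA : Matrix (Fin n ⊕ Fin n) (Fin n ⊕ Fin n) ℝ := fromBlocks A (E * c) (e * C) a
    let cB : Matrix (Fin n ⊕ Fin n) (Fin m₁ ⊕ Fin m₂) ℝ := fromBlocks B (E * d) (e * D) b
    let Θ : Matrix (Fin n ⊕ Fin n) (Fin n ⊕ Fin n) ℝ := fromBlocks Θ₁ 0 0 Θ₂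
    let J : Matrix (Fin m₁ ⊕ Fin m₂) (Fin m₁ ⊕ Fin m₂) ℝ := fromBlocks J₁ 0 0 J₂
    cA * Θ + Θ * cAᵀ + cB * J * cBᵀ = 0 := by
  intro cA cB Θ J
  have hT : Θ₁ * Cᵀ + B * (J₁ * Dᵀ) = 0 := by
    have h := congrArg (fun M => -Mᵀ) hPR2
    simpa [Matrix.transpose_mul, hΘ₁, hJ₁, Matrix.mul_assoc, add_comm] using h
  have hTc : Θ₂ * cᵀ + b * (J₂ * dᵀ) = 0 := by
    have h := congrArg (fun M => -Mᵀ) hPR2c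
    simpa [Matrix.transpose_mul, hΘ₂, hJ₂, Matrix.mul_assoc, add_comm] using h
  have h12 := congrArg₂ (· + ·) (congrArg (E * ·) hPR2c) (congrArg (· * eᵀ) hT)
  have h21 := congrArg₂ (· + ·) (congrArg (e * ·) hPR2) (congrArg (· * Eᵀ) hTc)
  simp only [Matrix.mul_add, Matrix.add_mul, Matrix.mul_assoc, Matrix.mul_zero, Matrix.zero_mul,
    add_zero] at h12 h21 hPR1 hPR1c
  simp only [cA, cB, Θ, J, fromBlocks_transpose, fromBlocks_multiply, fromBlocks_add,
    Matrix.transpose_mul, Matrix.mul_zero, Matrix.zero_mul, add_zero, zero_add, Matrix.mul_assoc]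
  rw [← fromBlocks_zero]
  congr 1
  · rw [← hPR1]; abel
  · rw [← h12]; abel
  · rw [← h21]; abel
  · rw [← hPR1c]; abel
end

section
/- Let Θ₂ ∈ ℝ^{n×n} and J₂ ∈ ℝ^{m₂×m₂} be antisymmetric, J̃₁ ∈ ℝ^{p₁×p₁} be antisymmetric, R₂ ∈ ℝ^{n×n} be symmetric, and let M₂ ∈ ℝ^{m₂×n}, L₂ ∈ ℝ^{p₁×n}, d ∈ ℝ^{p₂×m₂} be arbitrary. Define a := 2·Θ₂·(R₂ + M₂ᵀ·J₂·M₂ + L₂ᵀ·J̃₁·L₂), b := 2·Θ₂·M₂ᵀ, c := 2·d·J₂·M₂, e := 2·Θ₂·L₂ᵀ. Then the physical realizability conditions a·Θ₂ + Θ₂·aᵀ + b·J₂·bᵀ + e·J̃₁·eᵀ = 0 and c·Θ₂ + d·J₂·bᵀ = 0 hold. -/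
open Matrix

theorem stmt10 {n m₂ p₁ p₂ : ℕ}
    (Θ₂ : Matrix (Fin n) (Fin n) ℝ) (hΘ₂ : Θ₂ᵀ = -Θ₂)
    (J₂ : Matrix (Fin m₂) (Fin m₂) ℝ) (hJ₂ : J₂ᵀ = -J₂)
    (Jt₁ : Matrix (Fin p₁) (Fin p₁) ℝ) (hJt₁ : Jt₁ᵀ = -Jt₁)
    (R₂ : Matrix (Fin n) (Fin n) ℝ) (hR₂ : R₂ᵀ = R₂)
    (M₂ : Matrix (Fin m₂) (Fin n) ℝ) (L₂ : Matrix (Fin p₁) (Fin n) ℝ)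
    (d : Matrix (Fin p₂) (Fin m₂) ℝ)
    (a : Matrix (Fin n) (Fin n) ℝ) (b : Matrix (Fin n) (Fin m₂) ℝ)
    (c : Matrix (Fin p₂) (Fin n) ℝ) (e : Matrix (Fin n) (Fin p₁) ℝ)
    (ha : a = (2 : ℝ) • (Θ₂ * (R₂ + M₂ᵀ * J₂ * M₂ + L₂ᵀ * Jt₁ * L₂)))
    (hb : b = (2 : ℝ) • (Θ₂ * M₂ᵀ))
    (hc : c = (2 : ℝ) • (d * J₂ * M₂))
    (he : e = (2 : ℝ) • (Θ₂ * L₂ᵀ)) :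
    a * Θ₂ + Θ₂ * aᵀ + b * J₂ * bᵀ + e * Jt₁ * eᵀ = 0 ∧
    c * Θ₂ + d * J₂ * bᵀ = 0 := by
  subst ha hb hc he
  -- With `X = M₂ᵀ J₂ M₂` and `Y = L₂ᵀ Jt₁ L₂` antisymmetric, `a Θ₂ + Θ₂ aᵀ = 4 Θ₂ (X + Y) Θ₂`: the
  -- `R₂` terms cancel. As `bᵀ = -2 M₂ Θ₂` and `eᵀ = -2 L₂ Θ₂`, the other two terms sum to the opposite.
  constructor
  · simp only [transpose_smul, transpose_mul, transpose_add, transpose_transpose, hΘ₂, hJ₂, hJt₁,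
      hR₂, Matrix.mul_add, Matrix.add_mul, Matrix.mul_neg, Matrix.neg_mul, Matrix.mul_smul,
      Matrix.smul_mul, Matrix.mul_assoc, smul_add, smul_neg, neg_neg]
    module
  · simp only [transpose_smul, transpose_mul, transpose_transpose, hΘ₂, Matrix.mul_neg,
      Matrix.mul_smul, Matrix.smul_mul, Matrix.mul_assoc]
    module
end

section
/- Let Θ₁ ∈ ℝ^{n×n}, J₁ ∈ ℝ^{m₁×m₁}, J₂ ∈ ℝ^{m₂×m₂} be antisymmetric, let A ∈ ℝ^{n×n}, B ∈ ℝ^{n×m₁}, C ∈ ℝ^{p₁×n}, D ∈ ℝ^{p₁×m₁}, E ∈ ℝ^{n×p₂}, d ∈ ℝ^{p₂×m₂}, b ∈ ℝ^{n×m₂}, c ∈ ℝ^{p₂×n}, e ∈ ℝ^{n×p₁}, and suppose a = A − e·C + E·c (Luenberger structure). Set S := [[I_n, −I_n],[0, I_n]], 𝒜 := [[A, E·c],[e·C, a]], ℬ := [[B, E·d],[e·D, b]], Θ := diag(Θ₁, −Θ₁), J := diag(J₁, J₂). Then the top-left n×n block of the matrix S·(𝒜·Θ + Θ·𝒜ᵀ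 + ℬ·J·ℬᵀ)·Sᵀ equals (B − e·D)·J₁·(B − e·D)ᵀ + (E·d − b)·J₂·(E·d − b)ᵀ. -/
open Matrix

theorem stmt16 {n m₁ m₂ p₁ p₂ : ℕ}
    (Θ₁ : Matrix (Fin n) (Fin n) ℝ) (hΘ₁ : Θ₁ᵀ = -Θ₁)
    (J₁ : Matrix (Fin m₁) (Fin m₁) ℝ) (hJ₁ : J₁ᵀ = -J₁)
    (J₂ : Matrix (Fin m₂) (Fin m₂) ℝ) (hJ₂ : J₂ᵀ = -J₂)
    (A : Matrix (Fin n) (Fin n) ℝ) (B : Matrix (Fin n) (Fin m₁) ℝ)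
    (C : Matrix (Fin p₁) (Fin n) ℝ) (D : Matrix (Fin p₁) (Fin m₁) ℝ)
    (E : Matrix (Fin n) (Fin p₂) ℝ) (d : Matrix (Fin p₂) (Fin m₂) ℝ)
    (b : Matrix (Fin n) (Fin m₂) ℝ) (c : Matrix (Fin p₂) (Fin n) ℝ)
    (e : Matrix (Fin n) (Fin p₁) ℝ)
    (a : Matrix (Fin n) (Fin n) ℝ) (ha : a = A - e * C + E * c) :
    let S : Matrix (Fin n ⊕ Fin n) (Fin n ⊕ Fin n) ℝ := fromBlocks 1 (-1) 0 1
    let cA : Matrix (Fin n ⊕ Fin n) (Fin n ⊕ Fin n) ℝ := fromBlocks A (E * c) (e * C) a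
    let cB : Matrix (Fin n ⊕ Fin n) (Fin m₁ ⊕ Fin m₂) ℝ := fromBlocks B (E * d) (e * D) b
    let Θ : Matrix (Fin n ⊕ Fin n) (Fin n ⊕ Fin n) ℝ := fromBlocks Θ₁ 0 0 (-Θ₁)
    let J : Matrix (Fin m₁ ⊕ Fin m₂) (Fin m₁ ⊕ Fin m₂) ℝ := fromBlocks J₁ 0 0 J₂
    (S * (cA * Θ + Θ * cAᵀ + cB * J * cBᵀ) * Sᵀ).toBlocks₁₁
      = (B - e * D) * J₁ * (B - e * D)ᵀ + (E * d - b) * J₂ * (E * d - b)ᵀ := by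
  intro S cA cB Θ J
  subst ha
  simp only [S, cA, cB, Θ, J, fromBlocks_transpose, fromBlocks_multiply, fromBlocks_add,
    toBlocks_fromBlocks₁₁, transpose_add, transpose_sub, transpose_neg, transpose_one,
    transpose_zero, Matrix.mul_add, Matrix.add_mul, Matrix.mul_sub, Matrix.sub_mul,
    Matrix.mul_neg, Matrix.neg_mul, Matrix.mul_one, Matrix.one_mul, Matrix.mul_zero,
    Matrix.zero_mul]
  -- The top-left block is `M₁₁ - M₁₂ - M₂₁ + M₂₂`; its `Θ₁`-terms are
  -- `(A + E * c - e * C - a) * Θ₁` and `Θ₁ * (A + E * c - e * C - a)ᵀ`, which vanish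
  -- by the choice of `a`.
  abel
end

section
/- Let J ∈ ℝ^{m×m} and λ ∈ ℝ^{n×n} be antisymmetric, Δ ∈ ℝ^{s×m}, Γ ∈ ℝ^{n×m}, and suppose K := Δ·J·Δᵀ satisfies K² = −I_s; set γ₀ := −Γ·J·Δᵀ·K. Then the function g : ℝ^{n×s} → ℝ given by g(γ) = ½·Tr(λᵀ·(Γ − γ·Δ)·J·(Γ − γ·Δ)ᵀ) is Fréchet differentiable at every γ, and its derivative in any direction h ∈ ℝ^{n×s} equals Tr((λ·(γ₀ − γ)·K)ᵀ·h); that is, the gradient of g at γ with respect to the Frobenius inner product is λ·(γ₀ − γ)·K. -/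
/-!
With `X = Γ - γ Δ` and `B(X, Y) = Tr(λᵀ X J Yᵀ)`, the function is `½ B(X, X)`, so its derivative in
direction `h` is `½ (B(X, -hΔ) + B(-hΔ, X))`. Since `J` and `λ` are both antisymmetric, `B` is
symmetric (`trace_form_symm`), and the derivative equals `-B(hΔ, X) = Tr((λ X J Δᵀ)ᵀ h)`. Finally
`K² = -1` gives `γ₀ K = Γ J Δᵀ`, whence `X J Δᵀ = (γ₀ - γ) K`.
-/

open Matrix

attribute [local instance] Matrix.frobeniusSeminormedAddCommGroup
  Matrix.frobeniusNormedAddCommGroup Matrix.frobeniusNormedSpace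

lemma trace_form_symm {m n : ℕ}
    {J : Matrix (Fin m) (Fin m) ℝ} (hJ : Jᵀ = -J)
    {lam : Matrix (Fin n) (Fin n) ℝ} (hlam : lamᵀ = -lam)
    (X Y : Matrix (Fin n) (Fin m) ℝ) :
    (lamᵀ * (X * J * Yᵀ)).trace = (lamᵀ * (Y * J * Xᵀ)).trace := by
  rw [← Matrix.trace_transpose, Matrix.trace_mul_comm lamᵀ]
  simp [Matrix.transpose_mul, hJ, hlam, Matrix.mul_assoc]

/-- The bilinear form `(X, Y) ↦ Tr(λᵀ X J Yᵀ)` on `n × m` matrices. -/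
noncomputable def traceForm {m n : ℕ}
    (J : Matrix (Fin m) (Fin m) ℝ) (lam : Matrix (Fin n) (Fin n) ℝ) :
    Matrix (Fin n) (Fin m) ℝ →ₗ[ℝ] Matrix (Fin n) (Fin m) ℝ →ₗ[ℝ] ℝ :=
  LinearMap.mk₂ ℝ (fun X Y => (lamᵀ * (X * J * Yᵀ)).trace)
    (fun X X' Y => by simp [Matrix.add_mul, Matrix.mul_add])
    (fun c X Y => by simp)
    (fun X Y Y' => by simp [Matrix.mul_add])
    (fun c X Y => by simp)

theorem stmt17 {m s n : ℕ}
    (J : Matrix (Fin m) (Fin m) ℝ) (hJ : Jᵀ = -J)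
    (lam : Matrix (Fin n) (Fin n) ℝ) (hlam : lamᵀ = -lam)
    (Δ : Matrix (Fin s) (Fin m) ℝ) (Γ : Matrix (Fin n) (Fin m) ℝ)
    (K : Matrix (Fin s) (Fin s) ℝ) (hK : K = Δ * J * Δᵀ) (hK2 : K * K = -1)
    (γ₀ : Matrix (Fin n) (Fin s) ℝ) (hγ₀ : γ₀ = -(Γ * J * Δᵀ * K))
    (γ : Matrix (Fin n) (Fin s) ℝ) :
    ∃ L : Matrix (Fin n) (Fin s) ℝ →L[ℝ] ℝ,
      HasFDerivAt (fun γ' : Matrix (Fin n) (Fin s) ℝ =>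
        (2⁻¹ : ℝ) * (lamᵀ * ((Γ - γ' * Δ) * J * (Γ - γ' * Δ)ᵀ)).trace) L γ ∧
      ∀ h : Matrix (Fin n) (Fin s) ℝ, L h = ((lam * (γ₀ - γ) * K)ᵀ * h).trace := by
  have hgrad : lam * (γ₀ - γ) * K = lam * ((Γ - γ * Δ) * J * Δᵀ) := by
    have h0 : γ₀ * K = Γ * J * Δᵀ := by
      rw [hγ₀, Matrix.neg_mul, Matrix.mul_assoc _ K K, hK2]
      simp
    rw [Matrix.mul_assoc, Matrix.sub_mul, h0, hK]
    simp only [Matrix.sub_mul, Matrix.mul_assoc]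
  let R : Matrix (Fin n) (Fin s) ℝ →L[ℝ] Matrix (Fin n) (Fin m) ℝ :=
    LinearMap.toContinuousLinearMap
      { toFun := fun h => h * Δ
        map_add' := fun a b => Matrix.add_mul a b Δ
        map_smul' := fun c a => Matrix.smul_mul c a Δ }
  let B := (traceForm J lam).toContinuousBilinearMap
  have hX : HasFDerivAt (fun γ' : Matrix (Fin n) (Fin s) ℝ => Γ - γ' * Δ) (-R) γ :=
    R.hasFDerivAt.const_sub Γ
  have hB := (B.hasFDerivAt_of_bilinear hX hX).const_mul (2⁻¹ : ℝ)
  refine ⟨_, hB, fun h => ?_⟩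
  have hval : (lamᵀ * ((Γ - γ * Δ) * J * (-(h * Δ))ᵀ)).trace
      = ((lam * (γ₀ - γ) * K)ᵀ * h).trace := by
    rw [hgrad, ← Matrix.trace_transpose (_ * h), Matrix.transpose_mul, Matrix.transpose_transpose,
      Matrix.trace_mul_comm hᵀ, hlam]
    simp [Matrix.transpose_mul, Matrix.mul_assoc]
  change (2⁻¹ : ℝ) * ((lamᵀ * ((Γ - γ * Δ) * J * (-(h * Δ))ᵀ)).trace
    + (lamᵀ * ((-(h * Δ)) * J * (Γ - γ * Δ)ᵀ)).trace) = _
  rw [trace_form_symm hJ hlam (-(h * Δ)), hval]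
  ring
end
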